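/- Let u be a smooth solution of the 1-dimensional Schrödinger flow with Neumann boundary conditions on [0,T]. Then the quantity ∫₀¹ |∂_t u(x,t)|² dx − (1/4) ∫₀¹ |∂_x u(x,t)|⁴ dx is conserved: its time derivative vanishes for every t ∈ [0,T], so it equals its value at t = 0 for all t ∈ [0,T]. -/

import Mathlib

open MeasureTheory Set

noncomputable section

abbrev E3 := EuclideanSpace ℝ (Fin 3)

/-- The cross product on `EuclideanSpace ℝ (Fin 3)`. -/
def cross3 (a b : E3) : E3 :=
  (WithLp.equiv 2 (Fin 3 → ℝ)).symm
    (crossProduct ((WithLp.equiv 2 (Fin 3 → ℝ)) a) ((WithLp.equiv 2 (Fin 3 → ℝ)) b))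

/-- Partial derivative in the space variable of `u = u x t`. -/
def pdx (u : ℝ → ℝ → E3) : ℝ → ℝ → E3 := fun x t => deriv (fun y => u y t) x

/-- Partial derivative in the time variable of `u = u x t`. -/
def pdt (u : ℝ → ℝ → E3) : ℝ → ℝ → E3 := fun x t => deriv (fun s => u x s) t

/-- `u` is a smooth solution of the 1-dimensional Schrödinger flow with Neumann
boundary conditions on `[0,1] × [0,T]`. -/
def IsSol (T : ℝ) (u : ℝ → ℝ → E3) : Prop :=
  ContDiff ℝ (⊤ : ℕ∞) (fun p : ℝ × ℝ => u p.1 p.2) ∧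
  (∀ x ∈ Icc (0:ℝ) 1, ∀ t ∈ Icc (0:ℝ) T, ‖u x t‖ = 1) ∧
  (∀ x ∈ Icc (0:ℝ) 1, ∀ t ∈ Icc (0:ℝ) T, pdt u x t = cross3 (u x t) (pdx (pdx u) x t)) ∧
  (∀ t ∈ Icc (0:ℝ) T, pdx u 0 t = 0 ∧ pdx u 1 t = 0)

/-- Squared `L²` norm on `[0,1]`. -/
def L2sq (f : ℝ → E3) : ℝ := ∫ x in (0:ℝ)..1, ‖f x‖ ^ 2

/-- Squared `H^k` Sobolev norm on `[0,1]`. -/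
def Hsq (k : ℕ) (f : ℝ → E3) : ℝ :=
  ∑ j ∈ Finset.range (k + 1), ∫ x in (0:ℝ)..1, ‖deriv^[j] f x‖ ^ 2

/-
Write `a = u`, `b = u_x`, `c = u_t`, `d = u_xx`, `e = u_xt`, `q = u_xxt`, so that `c = a × d`. The
energy density `|c|² - |b|⁴/4` obeys a local conservation law: its time derivative is the space
derivative of the flux `2⟨c, a × e⟩ - |b|²⟨b, c⟩`, which the Neumann condition kills at both ends.
Differentiating `c = a × d` in time gives `⟨c, u_tt⟩ = ⟨c, a × q⟩`. After cancellation the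
conservation law amounts to `⟨c, b × e⟩ = ⟨b, d⟩⟨b, c⟩`. This holds because `b` and `c` are tangent
to the sphere at `a`, so `b × c = ⟨a, b × c⟩ a = ⟨b, d⟩ a`, while differentiating `⟨a, c⟩ = 0` in
space gives `⟨a, e⟩ = -⟨b, c⟩`.
-/

open Function
open scoped ContDiff RealInnerProductSpace

section PartialDerivatives

variable {E : Type*} [NormedAddCommGroup E] [NormedSpace ℝ E] {f : ℝ → ℝ → E} {m n : ℕ∞ω}

theorem contDiff_deriv_left (hf : ContDiff ℝ n (uncurry f)) (hmn : m + 1 ≤ n) :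
    ContDiff ℝ m (uncurry fun x t => deriv (fun y => f y t) x) :=
  ContDiff.fderiv_apply (f := fun (p : ℝ × ℝ) y => f y p.2)
    (hf.comp (contDiff_snd.prodMk contDiff_fst.snd)) contDiff_fst contDiff_const hmn

theorem contDiff_deriv_right (hf : ContDiff ℝ n (uncurry f)) (hmn : m + 1 ≤ n) :
    ContDiff ℝ m (uncurry fun x t => deriv (f x) t) :=
  ContDiff.fderiv_apply (f := fun (p : ℝ × ℝ) s => f p.1 s)
    (hf.comp (contDiff_fst.fst.prodMk contDiff_snd)) contDiff_snd contDiff_const hmn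

theorem deriv_left_eq_fderiv {x t : ℝ} (hf : DifferentiableAt ℝ (uncurry f) (x, t)) :
    deriv (fun y => f y t) x = fderiv ℝ (uncurry f) (x, t) (1, 0) :=
  (hf.hasFDerivAt.comp_hasDerivAt (f := fun y => (y, t)) x
    ((hasDerivAt_id x).prodMk (hasDerivAt_const x t))).deriv

theorem deriv_right_eq_fderiv {x t : ℝ} (hf : DifferentiableAt ℝ (uncurry f) (x, t)) :
    deriv (f x) t = fderiv ℝ (uncurry f) (x, t) (0, 1) :=
  (hf.hasFDerivAt.comp_hasDerivAt (f := fun s => (x, s)) t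
    ((hasDerivAt_const t x).prodMk (hasDerivAt_id t))).deriv

theorem deriv_right_deriv_left_comm (hf : ContDiff ℝ 2 (uncurry f)) (x t : ℝ) :
    deriv (fun s => deriv (fun y => f y s) x) t = deriv (fun y => deriv (f y) t) x := by
  have hdiff : Differentiable ℝ (uncurry f) := hf.differentiable two_ne_zero
  have hfderiv : DifferentiableAt ℝ (fderiv ℝ (uncurry f)) (x, t) :=
    (hf.fderiv_right one_add_one_eq_two.le).differentiable one_ne_zero _
  have hsymm : IsSymmSndFDerivAt ℝ (uncurry f) (x, t) :=
    hf.contDiffAt.isSymmSndFDerivAt (by simp)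
  have hsnd (v w : ℝ × ℝ) : fderiv ℝ (uncurry fun x t => fderiv ℝ (uncurry f) (x, t) v) (x, t) w =
      fderiv ℝ (fderiv ℝ (uncurry f)) (x, t) w v := by
    change fderiv ℝ (fun p => fderiv ℝ (uncurry f) p v) (x, t) w = _
    simp [fderiv_clm_apply hfderiv (differentiableAt_const v)]
  simp only [deriv_left_eq_fderiv (hdiff _), deriv_right_eq_fderiv (hdiff _)]
  rw [deriv_right_eq_fderiv (f := fun x t => fderiv ℝ (uncurry f) (x, t) (1, 0))
      (hfderiv.clm_apply (differentiableAt_const _)),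
    deriv_left_eq_fderiv (f := fun x t => fderiv ℝ (uncurry f) (x, t) (0, 1))
      (hfderiv.clm_apply (differentiableAt_const _))]
  rw [hsnd, hsnd]
  exact hsymm.eq (0, 1) (1, 0)

theorem hasDerivAt_intervalIntegral_of_contDiff (hf : ContDiff ℝ 1 (uncurry f)) (a b t : ℝ) :
    HasDerivAt (fun s => ∫ x in a..b, f x s) (∫ x in a..b, deriv (f x) t) t := by
  have hf' : Continuous (uncurry fun x s => deriv (f x) s) :=
    (contDiff_deriv_right hf (zero_add 1).le).continuous
  obtain ⟨M, hM⟩ :=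
    (isCompact_uIcc.prod (isCompact_Icc (a := t - 1) (b := t + 1))).bddAbove_image
      hf'.norm.continuousOn
  refine (intervalIntegral.hasDerivAt_integral_of_dominated_loc_of_deriv_le
    (F := fun s x => f x s) (F' := fun s x => deriv (f x) s) (bound := fun _ => M)
    (Icc_mem_nhds (sub_one_lt t) (lt_add_one t))
    (.of_forall fun s => hf.continuous.curry_left.aestronglyMeasurable)
    (hf.continuous.curry_left.intervalIntegrable a b)
    hf'.curry_left.aestronglyMeasurable ?_ intervalIntegrable_const ?_).2
  · exact .of_forall fun x hx s hs => hM ⟨(x, s), ⟨uIoc_subset_uIcc hx, hs⟩, rfl⟩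
  · have hdiff : Differentiable ℝ (uncurry f) := hf.differentiable one_ne_zero
    exact .of_forall fun x _ s _ =>
      (hdiff.comp (by fun_prop : Differentiable ℝ (Prod.mk x)) s).hasDerivAt

theorem hasDerivAt_intervalIntegral_of_conservationLaw [CompleteSpace E] {flux : ℝ → E} {a b t : ℝ}
    (hf : ContDiff ℝ 1 (uncurry f))
    (hflux : ∀ x ∈ uIcc a b, HasDerivAt flux (deriv (f x) t) x) :
    HasDerivAt (fun s => ∫ x in a..b, f x s) (flux b - flux a) t := by
  have hf' : Continuous (uncurry fun x s => deriv (f x) s) :=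
    (contDiff_deriv_right hf (zero_add 1).le).continuous
  rw [← intervalIntegral.integral_eq_sub_of_hasDerivAt hflux
    (hf'.curry_left.intervalIntegrable a b)]
  exact hasDerivAt_intervalIntegral_of_contDiff hf a b t

end PartialDerivatives

theorem hasDerivAt_eq_of_eqOn {𝕜 E : Type*} [NontriviallyNormedField 𝕜] [NormedAddCommGroup E]
    [NormedSpace 𝕜 E] {f g : 𝕜 → E} {f' g' : E} {s : Set 𝕜} {x : 𝕜} (hf : HasDerivAt f f' x)
    (hg : HasDerivAt g g' x) (hfg : EqOn f g s) (hs : UniqueDiffOn 𝕜 s) (hx : x ∈ s) : f' = g' :=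
  (hs x hx).eq_deriv s hf.hasDerivWithinAt (hg.hasDerivWithinAt.congr hfg (hfg hx))

section CrossProduct

theorem real_inner_eq_dotProduct {ι : Type*} [Fintype ι] (x y : EuclideanSpace ℝ ι) :
    ⟪x, y⟫ = x.ofLp ⬝ᵥ y.ofLp := by
  rw [EuclideanSpace.inner_eq_star_dotProduct, star_trivial, dotProduct_comm]

theorem ofLp_cross3 (a b : E3) : (cross3 a b).ofLp = crossProduct a.ofLp b.ofLp := rfl

theorem inner_self_cross3 (a b : E3) : ⟪a, cross3 a b⟫ = 0 := by
  rw [real_inner_eq_dotProduct, ofLp_cross3, dot_self_cross]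

theorem inner_cross3_self (a b : E3) : ⟪b, cross3 a b⟫ = 0 := by
  rw [real_inner_eq_dotProduct, ofLp_cross3, dot_cross_self]

theorem inner_cross3_rotate (a b c : E3) : ⟪a, cross3 b c⟫ = ⟪b, cross3 c a⟫ := by
  simp only [real_inner_eq_dotProduct, ofLp_cross3]
  exact triple_product_permutation _ _ _

theorem cross3_anticomm (a b : E3) : cross3 a b = -cross3 b a := by
  apply WithLp.ofLp_injective
  rw [WithLp.ofLp_neg, ofLp_cross3, ofLp_cross3, cross_anticomm]

theorem cross3_cross3 (a b c : E3) : cross3 (cross3 a b) c = ⟪a, c⟫ • b - ⟪b, c⟫ • a := by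
  apply WithLp.ofLp_injective
  simp only [real_inner_eq_dotProduct, ofLp_cross3, WithLp.ofLp_sub, WithLp.ofLp_smul]
  exact cross_cross_eq_smul_sub_smul _ _ _

theorem cross3_cross3' (a b c : E3) : cross3 a (cross3 b c) = ⟪a, c⟫ • b - ⟪b, a⟫ • c := by
  apply WithLp.ofLp_injective
  simp only [real_inner_eq_dotProduct, ofLp_cross3, WithLp.ofLp_sub, WithLp.ofLp_smul]
  exact cross_cross_eq_smul_sub_smul' _ _ _

theorem isBilinearMap_cross3 : IsBilinearMap ℝ cross3 where
  add_left x₁ x₂ y := by simp [cross3]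
  smul_left c x y := by simp [cross3]
  add_right x y₁ y₂ := by simp [cross3]
  smul_right c x y := by simp [cross3]

theorem cross3_zero (a : E3) : cross3 a 0 = 0 :=
  map_zero (isBilinearMap_cross3.toLinearMap a)

theorem hasDerivAt_cross3 {f g : ℝ → E3} {f' g' : E3} {x : ℝ} (hf : HasDerivAt f f' x)
    (hg : HasDerivAt g g' x) :
    HasDerivAt (fun y => cross3 (f y) (g y)) (cross3 (f x) g' + cross3 f' (g x)) x :=
  isBilinearMap_cross3.toContinuousBilinearMap.hasDerivAt_of_bilinear (fun _ => hf) fun _ => hg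

theorem cross3_eq_smul_of_orthogonal {a b c : E3} (ha : ‖a‖ = 1) (hab : ⟪a, b⟫ = 0)
    (hac : ⟪a, c⟫ = 0) : cross3 b c = ⟪a, cross3 b c⟫ • a := by
  have hparallel : cross3 (cross3 b c) a = 0 := by
    rw [cross3_cross3, real_inner_comm, hab, real_inner_comm, hac, zero_smul, zero_smul, sub_zero]
  have hexpand := cross3_cross3' a (cross3 b c) a
  rw [hparallel, cross3_zero, real_inner_self_eq_norm_sq, ha, one_pow, one_smul] at hexpand
  rw [real_inner_comm]
  exact sub_eq_zero.1 hexpand.symm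

theorem inner_cross3_cross3_self {a b : E3} (ha : ‖a‖ = 1) (hab : ⟪a, b⟫ = 0) (d : E3) :
    ⟪a, cross3 b (cross3 a d)⟫ = ⟪b, d⟫ := by
  rw [inner_cross3_rotate, cross3_cross3, real_inner_self_eq_norm_sq, ha, inner_sub_right,
    inner_smul_right, inner_smul_right, real_inner_comm a b, hab]
  ring

theorem inner_cross3_cross3_of_tangent {a b d e : E3} (ha : ‖a‖ = 1) (hab : ⟪a, b⟫ = 0)
    (hae : ⟪a, e⟫ = -⟪b, cross3 a d⟫) :
    ⟪cross3 a d, cross3 b e⟫ = ⟪b, d⟫ * ⟪b, cross3 a d⟫ := by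
  have hbc : cross3 b (cross3 a d) = ⟪b, d⟫ • a := by
    rw [cross3_eq_smul_of_orthogonal ha hab (inner_self_cross3 a d),
      inner_cross3_cross3_self ha hab]
  calc ⟪cross3 a d, cross3 b e⟫
      = -⟪e, cross3 b (cross3 a d)⟫ := by
        rw [inner_cross3_rotate, inner_cross3_rotate, cross3_anticomm, inner_neg_right]
    _ = ⟪b, d⟫ * ⟪b, cross3 a d⟫ := by
        rw [hbc, inner_smul_right, real_inner_comm a e, hae]
        ring

end CrossProduct

section SpaceTimeMaps

variable {f : ℝ → ℝ → E3}

theorem contDiff_pdx (hf : ContDiff ℝ ∞ (uncurry f)) : ContDiff ℝ ∞ (uncurry (pdx f)) :=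
  contDiff_deriv_left hf le_rfl

theorem contDiff_pdt (hf : ContDiff ℝ ∞ (uncurry f)) : ContDiff ℝ ∞ (uncurry (pdt f)) :=
  contDiff_deriv_right hf le_rfl

theorem hasDerivAt_pdx (hf : ContDiff ℝ ∞ (uncurry f)) (x t : ℝ) :
    HasDerivAt (fun y => f y t) (pdx f x t) x :=
  have hdiff : Differentiable ℝ (uncurry f) := hf.differentiable (by simp)
  (hdiff.comp (by fun_prop : Differentiable ℝ fun y : ℝ => (y, t)) x).hasDerivAt

theorem hasDerivAt_pdt (hf : ContDiff ℝ ∞ (uncurry f)) (x t : ℝ) :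
    HasDerivAt (f x) (pdt f x t) t :=
  have hdiff : Differentiable ℝ (uncurry f) := hf.differentiable (by simp)
  (hdiff.comp (by fun_prop : Differentiable ℝ (Prod.mk x)) t).hasDerivAt

theorem pdt_pdx_comm (hf : ContDiff ℝ ∞ (uncurry f)) : pdt (pdx f) = pdx (pdt f) :=
  funext₂ (deriv_right_deriv_left_comm (contDiff_infty.1 hf 2))

end SpaceTimeMaps

section Energy

/-- The density `|u_t|² - |u_x|⁴ / 4` of the quantity conserved by the Schrödinger flow. -/
def energyDensity (u : ℝ → ℝ → E3) (x t : ℝ) : ℝ :=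
  ‖pdt u x t‖ ^ 2 - 1 / 4 * ‖pdx u x t‖ ^ 4

/-- The flux of `energyDensity`: along a Schrödinger flow, the time derivative of the density is the
space derivative of the flux (so the sign is opposite to that of a physical outward flux). -/
def energyFlux (u : ℝ → ℝ → E3) (x t : ℝ) : ℝ :=
  2 * ⟪pdt u x t, cross3 (u x t) (pdx (pdt u) x t)⟫ - ‖pdx u x t‖ ^ 2 * ⟪pdx u x t, pdt u x t⟫

/-- The quantity `∫ |u_t|² - (1/4) ∫ |u_x|⁴` over `[0, 1]` conserved by the Schrödinger flow. -/
def energy (u : ℝ → ℝ → E3) (t : ℝ) : ℝ :=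
  (∫ x in (0 : ℝ)..1, ‖pdt u x t‖ ^ 2) - 1 / 4 * ∫ x in (0 : ℝ)..1, ‖pdx u x t‖ ^ 4

variable {u : ℝ → ℝ → E3}

theorem contDiff_energyDensity (hu : ContDiff ℝ ∞ (uncurry u)) :
    ContDiff ℝ ∞ (uncurry (energyDensity u)) := by
  have hquartic : ContDiff ℝ ∞ fun p : ℝ × ℝ => (‖pdx u p.1 p.2‖ ^ 2) ^ 2 :=
    ((contDiff_pdx hu).norm_sq ℝ).pow 2
  simp only [← pow_mul] at hquartic
  exact ((contDiff_pdt hu).norm_sq ℝ).sub (contDiff_const.mul hquartic)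

theorem energy_eq_integral_energyDensity (hu : ContDiff ℝ ∞ (uncurry u)) (t : ℝ) :
    energy u t = ∫ x in (0 : ℝ)..1, energyDensity u x t := by
  have hkinetic : IntervalIntegrable (fun x => ‖pdt u x t‖ ^ 2) volume 0 1 :=
    ((contDiff_pdt hu).continuous.curry_left.norm.pow 2).intervalIntegrable 0 1
  have hquartic : IntervalIntegrable (fun x => 1 / 4 * ‖pdx u x t‖ ^ 4) volume 0 1 :=
    (((contDiff_pdx hu).continuous.curry_left.norm.pow 4).const_mul (1 / 4)).intervalIntegrable 0 1
  rw [energy, ← intervalIntegral.integral_const_mul,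
    ← intervalIntegral.integral_sub hkinetic hquartic]
  rfl

theorem hasDerivAt_energyDensity (hu : ContDiff ℝ ∞ (uncurry u)) (x t : ℝ) :
    HasDerivAt (energyDensity u x) (2 * ⟪pdt u x t, pdt (pdt u) x t⟫
      - ‖pdx u x t‖ ^ 2 * ⟪pdx u x t, pdx (pdt u) x t⟫) t := by
  have hkinetic := (hasDerivAt_pdt (contDiff_pdt hu) x t).norm_sq
  have hquartic := ((hasDerivAt_pdt (contDiff_pdx hu) x t).norm_sq.pow 2).const_mul (1 / 4)
  rw [pdt_pdx_comm hu] at hquartic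
  convert! hkinetic.sub hquartic using 1
  · ext s
    simp only [energyDensity, Pi.sub_apply, Pi.pow_apply]
    ring
  · ring

theorem hasDerivAt_energyFlux (hu : ContDiff ℝ ∞ (uncurry u)) (x t : ℝ) :
    HasDerivAt (fun y => energyFlux u y t)
      (2 * (⟪pdt u x t, cross3 (u x t) (pdx (pdx (pdt u)) x t)⟫
          + ⟪pdt u x t, cross3 (pdx u x t) (pdx (pdt u) x t)⟫)
        - (2 * ⟪pdx u x t, pdx (pdx u) x t⟫ * ⟪pdx u x t, pdt u x t⟫
          + ‖pdx u x t‖ ^ 2 *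
            (⟪pdx u x t, pdx (pdt u) x t⟫ + ⟪pdx (pdx u) x t, pdt u x t⟫))) x := by
  have hx := hasDerivAt_pdx hu x t
  have ht := hasDerivAt_pdx (contDiff_pdt hu) x t
  have hxx := hasDerivAt_pdx (contDiff_pdx hu) x t
  have hxt := hasDerivAt_pdx (contDiff_pdx (contDiff_pdt hu)) x t
  convert! ((ht.inner ℝ (hasDerivAt_cross3 hx hxt)).const_mul 2).sub
    (hxx.norm_sq.mul (hxx.inner ℝ ht)) using 1
  rw [inner_cross3_self, add_zero, inner_add_right]

theorem energyFlux_eq_zero_of_pdx_eq_zero {x t : ℝ} {s : Set ℝ} (hu : ContDiff ℝ ∞ (uncurry u))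
    (hs : UniqueDiffOn ℝ s) (ht : t ∈ s) (hx : ∀ r ∈ s, pdx u x r = 0) : energyFlux u x t = 0 := by
  have hmixed : pdx (pdt u) x t = 0 := by
    rw [← pdt_pdx_comm hu]
    exact hasDerivAt_eq_of_eqOn (hasDerivAt_pdt (contDiff_pdx hu) x t) (hasDerivAt_const t 0) hx
      hs ht
  rw [energyFlux, hmixed, hx t ht, cross3_zero, inner_zero_right, inner_zero_left]
  ring

end Energy

namespace IsSol

variable {T : ℝ} {u : ℝ → ℝ → E3} {x t : ℝ}

theorem contDiff (hu : IsSol T u) : ContDiff ℝ ∞ (uncurry u) := hu.1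

theorem norm_eq_one (hu : IsSol T u) (hx : x ∈ Icc (0 : ℝ) 1) (ht : t ∈ Icc 0 T) : ‖u x t‖ = 1 :=
  hu.2.1 x hx t ht

theorem pdx_zero (hu : IsSol T u) (ht : t ∈ Icc 0 T) : pdx u 0 t = 0 := (hu.2.2.2 t ht).1

theorem pdx_one (hu : IsSol T u) (ht : t ∈ Icc 0 T) : pdx u 1 t = 0 := (hu.2.2.2 t ht).2

theorem pdt_eq_cross3 (hu : IsSol T u) (hx : x ∈ Icc (0 : ℝ) 1) (ht : t ∈ Icc 0 T) :
    pdt u x t = cross3 (u x t) (pdx (pdx u) x t) :=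
  hu.2.2.1 x hx t ht

theorem inner_pdx_eq_zero (hu : IsSol T u) (hx : x ∈ Icc (0 : ℝ) 1) (ht : t ∈ Icc 0 T) :
    ⟪u x t, pdx u x t⟫ = 0 := by
  have hsphere : EqOn (fun y => ‖u y t‖ ^ 2) (fun _ => 1) (Icc 0 1) := fun y hy => by
    simp only [hu.norm_eq_one hy ht, one_pow]
  have hderiv := hasDerivAt_eq_of_eqOn (hasDerivAt_pdx hu.contDiff x t).norm_sq
    (hasDerivAt_const x 1) hsphere (uniqueDiffOn_Icc zero_lt_one) hx
  exact (mul_eq_zero_iff_left two_ne_zero).1 hderiv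

theorem inner_pdx_pdt_eq_neg (hu : IsSol T u) (hx : x ∈ Icc (0 : ℝ) 1) (ht : t ∈ Icc 0 T) :
    ⟪u x t, pdx (pdt u) x t⟫ = -⟪pdx u x t, pdt u x t⟫ := by
  have htangent : EqOn (fun y => ⟪u y t, pdt u y t⟫) (fun _ => 0) (Icc 0 1) := fun y hy => by
    simp only [hu.pdt_eq_cross3 hy ht, inner_self_cross3]
  exact eq_neg_of_add_eq_zero_left <| hasDerivAt_eq_of_eqOn
    ((hasDerivAt_pdx hu.contDiff x t).inner ℝ (hasDerivAt_pdx (contDiff_pdt hu.contDiff) x t))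
    (hasDerivAt_const x 0) htangent (uniqueDiffOn_Icc zero_lt_one) hx

theorem pdt_pdt_eq (hu : IsSol T u) (hT : 0 < T) (hx : x ∈ Icc (0 : ℝ) 1) (ht : t ∈ Icc 0 T) :
    pdt (pdt u) x t =
      cross3 (u x t) (pdx (pdx (pdt u)) x t) + cross3 (pdt u x t) (pdx (pdx u) x t) := by
  have hS := hu.contDiff
  rw [← pdt_pdx_comm hS, ← pdt_pdx_comm (contDiff_pdx hS)]
  exact hasDerivAt_eq_of_eqOn (hasDerivAt_pdt (contDiff_pdt hS) x t)
    (hasDerivAt_cross3 (hasDerivAt_pdt hS x t)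
      (hasDerivAt_pdt (contDiff_pdx (contDiff_pdx hS)) x t))
    (fun s hs => hu.pdt_eq_cross3 hx hs) (uniqueDiffOn_Icc hT) ht

theorem inner_pdt_pdt_pdt (hu : IsSol T u) (hT : 0 < T) (hx : x ∈ Icc (0 : ℝ) 1)
    (ht : t ∈ Icc 0 T) :
    ⟪pdt u x t, pdt (pdt u) x t⟫ = ⟪pdt u x t, cross3 (u x t) (pdx (pdx (pdt u)) x t)⟫ := by
  rw [hu.pdt_pdt_eq hT hx ht, inner_add_right, inner_self_cross3, add_zero]

theorem inner_pdt_cross3_pdx (hu : IsSol T u) (hx : x ∈ Icc (0 : ℝ) 1) (ht : t ∈ Icc 0 T) :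
    ⟪pdt u x t, cross3 (pdx u x t) (pdx (pdt u) x t)⟫ =
      ⟪pdx u x t, pdx (pdx u) x t⟫ * ⟪pdx u x t, pdt u x t⟫ := by
  have htangent := hu.inner_pdx_pdt_eq_neg hx ht
  rw [hu.pdt_eq_cross3 hx ht] at htangent ⊢
  exact inner_cross3_cross3_of_tangent (hu.norm_eq_one hx ht) (hu.inner_pdx_eq_zero hx ht) htangent

theorem hasDerivAt_energyFlux_deriv_energyDensity (hu : IsSol T u) (hT : 0 < T)
    (hx : x ∈ Icc (0 : ℝ) 1) (ht : t ∈ Icc 0 T) :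
    HasDerivAt (fun y => energyFlux u y t) (deriv (energyDensity u x) t) x := by
  have horth : ⟪pdx (pdx u) x t, pdt u x t⟫ = 0 := by
    rw [hu.pdt_eq_cross3 hx ht, inner_cross3_self]
  rw [(hasDerivAt_energyDensity hu.contDiff x t).deriv]
  convert hasDerivAt_energyFlux hu.contDiff x t using 1
  rw [hu.inner_pdt_pdt_pdt hT hx ht, hu.inner_pdt_cross3_pdx hx ht, horth]
  ring

theorem hasDerivAt_energy (hu : IsSol T u) (hT : 0 < T) (ht : t ∈ Icc 0 T) :
    HasDerivAt (energy u) 0 t := by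
  have hleft : energyFlux u 0 t = 0 :=
    energyFlux_eq_zero_of_pdx_eq_zero hu.contDiff (uniqueDiffOn_Icc hT) ht fun _ => hu.pdx_zero
  have hright : energyFlux u 1 t = 0 :=
    energyFlux_eq_zero_of_pdx_eq_zero hu.contDiff (uniqueDiffOn_Icc hT) ht fun _ => hu.pdx_one
  have hlaw := hasDerivAt_intervalIntegral_of_conservationLaw (a := 0) (b := 1) (t := t)
    (flux := fun x => energyFlux u x t)
    (contDiff_infty.1 (contDiff_energyDensity hu.contDiff) 1)
    fun x hx =>
      hu.hasDerivAt_energyFlux_deriv_energyDensity hT (uIcc_of_le (zero_le_one' ℝ) ▸ hx) ht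
  simp only [hleft, hright, sub_zero] at hlaw
  rwa [funext (energy_eq_integral_energyDensity hu.contDiff)]

theorem energy_eq_energy_zero (hu : IsSol T u) (hT : 0 < T) (ht : t ∈ Icc 0 T) :
    energy u t = energy u 0 :=
  constant_of_has_deriv_right_zero
    (fun _ hs => (hu.hasDerivAt_energy hT hs).continuousAt.continuousWithinAt)
    (fun _ hs => (hu.hasDerivAt_energy hT (Ico_subset_Icc_self hs)).hasDerivWithinAt) t ht

end IsSol

theorem conservation_law_schrodinger_flow
    (T : ℝ) (hT : 0 < T) (u : ℝ → ℝ → E3) (hu : IsSol T u) :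
    ∀ t ∈ Icc (0:ℝ) T,
      deriv (fun s => (∫ x in (0:ℝ)..1, ‖pdt u x s‖ ^ 2)
          - (1/4) * ∫ x in (0:ℝ)..1, ‖pdx u x s‖ ^ 4) t = 0 ∧
      (∫ x in (0:ℝ)..1, ‖pdt u x t‖ ^ 2) - (1/4) * (∫ x in (0:ℝ)..1, ‖pdx u x t‖ ^ 4)
        = (∫ x in (0:ℝ)..1, ‖pdt u x 0‖ ^ 2) - (1/4) * ∫ x in (0:ℝ)..1, ‖pdx u x 0‖ ^ 4 :=
  fun _ ht => ⟨(hu.hasDerivAt_energy hT ht).deriv, hu.energy_eq_energy_zero hT ht⟩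

end
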